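/- arXiv:2502.11867 — 3 statements merged into one kernel-verified Lean document; each statement's English description precedes it below -/
import Mathlib

section
/- The function f(x, y) = x · exp(y/x − 1) is convex on the convex set {(x, y) ∈ ℝ² : x > 0}. -/
/-!
On the half-plane `x > 0`, the function `x * exp (y / x - 1)` is the perspective `x * g (y / x)` of
the convex function `g t = exp (t - 1)`. The perspective of a convex function is positively
homogeneous, and it is subadditive because `(y + v) / (x + u)` is the average of `y / x` and `v / u`
with weights `x / (x + u)` and `u / (x + u)`. Positive homogeneity and subadditivity give convexity.
-/

theorem convexOn_of_map_smul_of_map_add_le {R M β : Type*} [Semiring R] [PartialOrder R]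
    [AddCommMonoid M] [Module R M] [AddCommMonoid β] [PartialOrder β] [Module R β]
    (C : ConvexCone R M) {f : M → β}
    (map_smul : ∀ ⦃c : R⦄, 0 < c → ∀ ⦃x⦄, x ∈ C → f (c • x) = c • f x)
    (map_add_le : ∀ ⦃x⦄, x ∈ C → ∀ ⦃y⦄, y ∈ C → f (x + y) ≤ f x + f y) :
    ConvexOn R C f := by
  refine convexOn_iff_forall_pos.2 ⟨C.convex, fun x hx y hy a b ha hb _ ↦ ?_⟩
  calc f (a • x + b • y) ≤ f (a • x) + f (b • y) :=
        map_add_le (C.smul_mem ha hx) (C.smul_mem hb hy)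
    _ = a • f x + b • f y := by rw [map_smul ha hx, map_smul hb hy]

/-- The perspective `(x, y) ↦ x • f (y / x)` of a function `f`, its positively homogeneous extension
from the slice `x = 1`. The quotient is encoded as `x⁻¹ • y`; over a field, the value at `x = 0` is
the junk value `0`. -/
def perspective {𝕜 E β : Type*} [Inv 𝕜] [SMul 𝕜 E] [SMul 𝕜 β] (f : E → β) (p : 𝕜 × E) : β :=
  p.1 • f (p.1⁻¹ • p.2)

section Perspective

variable {𝕜 E β : Type*} [Field 𝕜] [AddCommMonoid E] [Module 𝕜 E]

theorem inv_fst_smul_snd_smul {c : 𝕜} (hc : c ≠ 0) (p : 𝕜 × E) :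
    (c • p).1⁻¹ • (c • p).2 = p.1⁻¹ • p.2 := by
  simp [smul_smul, hc]

theorem inv_fst_smul_snd_add {p q : 𝕜 × E} (hp : p.1 ≠ 0) (hq : q.1 ≠ 0) :
    (p + q).1⁻¹ • (p + q).2 =
      (p.1 / (p.1 + q.1)) • p.1⁻¹ • p.2 + (q.1 / (p.1 + q.1)) • q.1⁻¹ • q.2 := by
  simp [smul_smul, div_mul_eq_mul_div, hp, hq]

theorem perspective_smul [AddCommMonoid β] [Module 𝕜 β] (f : E → β) {c : 𝕜} (hc : c ≠ 0)
    (p : 𝕜 × E) : perspective f (c • p) = c • perspective f p := by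
  rw [perspective, perspective, inv_fst_smul_snd_smul hc, Prod.smul_fst, smul_assoc]

variable [LinearOrder 𝕜] [IsStrictOrderedRing 𝕜] {s : Set E}

/-- The cone over `{1} × s`, that is, the points `(x, y)` with `0 < x` and `y / x ∈ s`: the natural
domain of the perspective of a function on `s`. -/
def perspectiveCone (hs : Convex 𝕜 s) : ConvexCone 𝕜 (𝕜 × E) where
  carrier := {p | 0 < p.1 ∧ p.1⁻¹ • p.2 ∈ s}
  smul_mem' c hc p hp :=
    ⟨mul_pos hc hp.1, by simpa only [inv_fst_smul_snd_smul hc.ne'] using hp.2⟩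
  add_mem' p hp q hq := by
    have h_pos : 0 < p.1 + q.1 := add_pos hp.1 hq.1
    refine ⟨h_pos, ?_⟩
    rw [inv_fst_smul_snd_add hp.1.ne' hq.1.ne']
    exact hs hp.2 hq.2 (div_nonneg hp.1.le h_pos.le) (div_nonneg hq.1.le h_pos.le)
      (by rw [← add_div, div_self h_pos.ne'])

variable [AddCommMonoid β] [PartialOrder β] [Module 𝕜 β] [PosSMulMono 𝕜 β] {f : E → β}

theorem perspective_add_le (hf : ConvexOn 𝕜 s f) {p q : 𝕜 × E}
    (hp : p ∈ perspectiveCone hf.1) (hq : q ∈ perspectiveCone hf.1) :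
    perspective f (p + q) ≤ perspective f p + perspective f q := by
  obtain ⟨hp_pos, hp_mem⟩ := hp
  obtain ⟨hq_pos, hq_mem⟩ := hq
  have h_pos : 0 < p.1 + q.1 := add_pos hp_pos hq_pos
  calc perspective f (p + q)
      = (p.1 + q.1) • f ((p.1 / (p.1 + q.1)) • p.1⁻¹ • p.2 +
          (q.1 / (p.1 + q.1)) • q.1⁻¹ • q.2) := by
        rw [perspective, inv_fst_smul_snd_add hp_pos.ne' hq_pos.ne', Prod.fst_add]
    _ ≤ (p.1 + q.1) • ((p.1 / (p.1 + q.1)) • f (p.1⁻¹ • p.2) +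
          (q.1 / (p.1 + q.1)) • f (q.1⁻¹ • q.2)) :=
        smul_le_smul_of_nonneg_left
          ((convexOn_iff_div.1 hf).2 hp_mem hq_mem hp_pos.le hq_pos.le h_pos) h_pos.le
    _ = perspective f p + perspective f q := by
        simp only [perspective, smul_add, smul_smul, mul_div_cancel₀ _ h_pos.ne']

theorem convexOn_perspective (hf : ConvexOn 𝕜 s f) :
    ConvexOn 𝕜 (perspectiveCone hf.1 : Set (𝕜 × E)) (perspective f) :=
  convexOn_of_map_smul_of_map_add_le _ (fun _ hc p _ ↦ perspective_smul f hc.ne' p)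
    fun _ hp _ hq ↦ perspective_add_le hf hp hq

end Perspective

/-- The function `f (x, y) = x * exp (y / x - 1)` is convex on the open
half-plane `{(x, y) : x > 0}`. -/
theorem convexOn_mul_exp_div_sub_one :
    ConvexOn ℝ {p : ℝ × ℝ | 0 < p.1}
      (fun p : ℝ × ℝ => p.1 * Real.exp (p.2 / p.1 - 1)) := by
  have hexp : ConvexOn ℝ Set.univ (fun t : ℝ ↦ Real.exp (t - 1)) :=
    convexOn_exp.translate_left (-1)
  have hdomain : (perspectiveCone hexp.1 : Set (ℝ × ℝ)) = {p | 0 < p.1} :=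
    Set.ext fun _ ↦ and_iff_left (Set.mem_univ _)
  have hperspective : perspective (fun t : ℝ ↦ Real.exp (t - 1)) =
      fun p : ℝ × ℝ ↦ p.1 * Real.exp (p.2 / p.1 - 1) := by
    funext p
    simp only [perspective, smul_eq_mul, div_eq_inv_mul]
  rw [← hdomain, ← hperspective]
  exact convexOn_perspective hexp
end

section
/- Let p̄ ∈ ℝ^K be a probability vector with p̄_k > 0 for all k and Σ_k p̄_k = 1, let ρ ≥ 0, c ∈ ℝ^K, μ ∈ ℝ, and ν > 0. Then for every probability vector p ∈ ℝ^K (p_k ≥ 0, Σ_k p_k = 1) satisfying the Kullback–Leibler constraint Σ_{k=1}^K p_k · log(p_k/p̄_k) ≤ ρ (with the convention 0·log 0 = 0), one has Σ_{k=1}^K p_k c_k ≤ μ + ρν + ν·Σ_{k=1}^K p̄_k · exp((c_k − μ)/ν − 1). -/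
open Finset

/-!
For fixed `q`, the convex conjugate of `p ↦ p * log (p / q)` on `p ≥ 0` is `s ↦ q * exp (s - 1)`.
Weak duality is the sum over `k` of the Fenchel–Young inequalities at `s = (c k - μ) / ν`: `μ` is
the multiplier of the constraint `∑ k, p k = 1` and `ν` that of the KL constraint.
-/

theorem mul_le_mul_log_div_add_mul_exp_sub_one {p q : ℝ} (hp : 0 ≤ p) (hq : 0 ≤ q)
    (hpq : q = 0 → p = 0) (s : ℝ) :
    p * s ≤ p * Real.log (p / q) + q * Real.exp (s - 1) := by
  rcases hp.eq_or_lt with rfl | p_pos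
  · simp only [zero_mul, zero_add]
    positivity
  have q_pos : 0 < q := hq.lt_of_ne' fun h => p_pos.ne' (hpq h)
  -- Equality holds at the maximizing `p`, where `log (p / q) = s - 1`.
  have tangent : s - Real.log (p / q) ≤ Real.exp (s - 1 - Real.log (p / q)) := by
    linarith [Real.add_one_le_exp (s - 1 - Real.log (p / q))]
  have mul_exp : p * Real.exp (s - 1 - Real.log (p / q)) = q * Real.exp (s - 1) := by
    rw [Real.exp_sub, Real.exp_log (div_pos p_pos q_pos)]
    field_simp
  calc p * s = p * Real.log (p / q) + p * (s - Real.log (p / q)) := by ring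
    _ ≤ p * Real.log (p / q) + p * Real.exp (s - 1 - Real.log (p / q)) := by gcongr
    _ = p * Real.log (p / q) + q * Real.exp (s - 1) := by rw [mul_exp]

theorem sum_mul_le_sum_mul_log_div_add_sum_mul_exp_sub_one {ι : Type*} {t : Finset ι}
    {p q : ι → ℝ} (hp : ∀ k ∈ t, 0 ≤ p k) (hq : ∀ k ∈ t, 0 ≤ q k)
    (hpq : ∀ k ∈ t, q k = 0 → p k = 0) (s : ι → ℝ) :
    ∑ k ∈ t, p k * s k ≤
      ∑ k ∈ t, p k * Real.log (p k / q k) + ∑ k ∈ t, q k * Real.exp (s k - 1) := by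
  rw [← sum_add_distrib]
  exact sum_le_sum fun k hk =>
    mul_le_mul_log_div_add_mul_exp_sub_one (hp k hk) (hq k hk) (hpq k hk) (s k)

theorem sum_mul_eq_add_mul_sum_mul_sub_div {ι F : Type*} [Field F] {t : Finset ι} {p : ι → F}
    (hp : ∑ k ∈ t, p k = 1) (c : ι → F) (μ : F) {ν : F} (hν : ν ≠ 0) :
    ∑ k ∈ t, p k * c k = μ + ν * ∑ k ∈ t, p k * ((c k - μ) / ν) := by
  have rescale (k : ι) : p k * c k = p k * μ + ν * (p k * ((c k - μ) / ν)) := by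
    field_simp
    ring
  rw [sum_congr rfl fun k _ => rescale k, sum_add_distrib, ← sum_mul, ← mul_sum, hp, one_mul]

theorem kl_weak_duality_general {ι : Type*} {t : Finset ι} {p q : ι → ℝ}
    (hp : ∀ k ∈ t, 0 ≤ p k) (hpsum : ∑ k ∈ t, p k = 1) (hq : ∀ k ∈ t, 0 ≤ q k)
    (hpq : ∀ k ∈ t, q k = 0 → p k = 0) {ρ : ℝ}
    (hKL : ∑ k ∈ t, p k * Real.log (p k / q k) ≤ ρ) (c : ι → ℝ) (μ : ℝ) {ν : ℝ} (hν : 0 < ν) :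
    ∑ k ∈ t, p k * c k ≤ μ + ρ * ν + ν * ∑ k ∈ t, q k * Real.exp ((c k - μ) / ν - 1) :=
  calc ∑ k ∈ t, p k * c k
      = μ + ν * ∑ k ∈ t, p k * ((c k - μ) / ν) :=
        sum_mul_eq_add_mul_sum_mul_sub_div hpsum c μ hν.ne'
    _ ≤ μ + ν * (∑ k ∈ t, p k * Real.log (p k / q k) +
          ∑ k ∈ t, q k * Real.exp ((c k - μ) / ν - 1)) := by
        gcongr
        exact sum_mul_le_sum_mul_log_div_add_sum_mul_exp_sub_one hp hq hpq _
    _ ≤ μ + ν * (ρ + ∑ k ∈ t, q k * Real.exp ((c k - μ) / ν - 1)) := by gcongr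
    _ = μ + ρ * ν + ν * ∑ k ∈ t, q k * Real.exp ((c k - μ) / ν - 1) := by ring

/-- Weak duality for the KL ambiguity set: any probability vector `p` with
`KL(p, p̄) ≤ ρ` satisfies
`∑ k, p k * c k ≤ μ + ρν + ν ∑ k, p̄ k * exp ((c k - μ) / ν - 1)`.
(Note `Real.log 0 = 0`, which encodes the convention `0 * log 0 = 0`.) -/
theorem kl_weak_duality
    (K : ℕ) (pbar : Fin K → ℝ) (hpbar : ∀ k, 0 < pbar k) (hpbarsum : ∑ k, pbar k = 1)
    (ρ : ℝ) (hρ : 0 ≤ ρ) (c : Fin K → ℝ) (μ ν : ℝ) (hν : 0 < ν)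
    (p : Fin K → ℝ) (hp : ∀ k, 0 ≤ p k) (hpsum : ∑ k, p k = 1)
    (hKL : ∑ k, p k * Real.log (p k / pbar k) ≤ ρ) :
    ∑ k, p k * c k ≤ μ + ρ * ν + ν * ∑ k, pbar k * Real.exp ((c k - μ) / ν - 1) :=
  kl_weak_duality_general (fun k _ => hp k) hpsum (fun k _ => (hpbar k).le)
    (fun k _ h => absurd h (hpbar k).ne') hKL c μ hν
end

section
/- Let p̄ ∈ ℝ^K be a probability vector with p̄_k > 0 for all k and Σ_k p̄_k = 1, let ρ > 0, and let c ∈ ℝ^K. Then sup{ Σ_{k=1}^K p_k c_k : p ∈ ℝ^K, p ≥ 0, Σ_k p_k = 1, Σ_k p_k log(p_k/p̄_k) ≤ ρ } = inf{ μ + ρν + ν·Σ_{k=1}^K p̄_k · exp((c_k − μ)/ν − 1) : μ ∈ ℝ, ν > 0 }. -/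
open Finset

/-!
Weak duality is the Fenchel–Young inequality for `p ↦ p log (p / q)`, whose conjugate is
`x ↦ q exp (x - 1)`, summed over the coordinates. For the converse, let `Z x = ∑ q k exp (x k)`
and tilt `q` to the probability vector `q_x k = q k exp (x k) / Z x`, so that
`KL(q_x, q) = ⟨q_x, x⟩ - log (Z x)`. For `t > 0`, at `ν = 1 / t` and the minimising
`μ = ν (log (Z (t c)) - 1)` the dual objective exceeds the primal value of `q_{tc}` by
`(ρ - KL(q_{tc}, q)) / t`. As `t` grows from `0`, the divergence starts from its minimum
`- log (∑ q k)`. If it reaches `ρ` at some `t > 0`, the gap vanishes there; if it does not, every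
`q_{tc}` is feasible and the gap tends to `0` as `t → ∞`. If `ρ` equals the minimum, `q_0` is
feasible and the gap is nonpositive for every `t > 0`, so the dual values are at most the primal
values of the `q_{tc}`, which tend to that of `q_0` as `t → 0⁺`.
-/

open Matrix Topology

lemma csSup_eq_csInf_of_forall_pos_le_add {S D : Set ℝ} (hle : ∀ s ∈ S, ∀ d ∈ D, s ≤ d)
    (hgap : ∀ ε > 0, ∃ s ∈ S, ∃ d ∈ D, d ≤ s + ε) : sSup S = sInf D := by
  obtain ⟨s₀, hs₀, d₀, hd₀, -⟩ := hgap 1 one_pos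
  refine le_antisymm
    (csSup_le ⟨s₀, hs₀⟩ fun s hs => le_csInf ⟨d₀, hd₀⟩ fun d hd => hle s hs d hd)
    (le_of_forall_pos_le_add fun ε hε => ?_)
  obtain ⟨s, hs, d, hd, hds⟩ := hgap ε hε
  calc sInf D ≤ d := csInf_le ⟨s₀, fun d hd => hle s₀ hs₀ d hd⟩ hd
    _ ≤ s + ε := hds
    _ ≤ sSup S + ε := by gcongr; exact le_csSup ⟨d₀, fun s hs => hle s hs d₀ hd₀⟩ hs

lemma nonempty_of_mem_stdSimplex {𝕜 ι : Type*} [Semiring 𝕜] [PartialOrder 𝕜] [Nontrivial 𝕜]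
    [Fintype ι] {p : ι → 𝕜} (hp : p ∈ stdSimplex 𝕜 ι) : Nonempty ι := by
  by_contra! h
  simp [stdSimplex_of_isEmpty_index] at hp

variable {ι : Type*} [Fintype ι] {p q x c : ι → ℝ} {ρ μ ν t ε : ℝ}

/-- The Kullback–Leibler divergence of `p` from a vector of positive weights `q`, not necessarily
of total mass one. `Real.log 0 = 0` gives the convention `0 * log 0 = 0`. -/
noncomputable def relEntropy (p q : ι → ℝ) : ℝ := ∑ k, p k * Real.log (p k / q k)

/-- The Kullback–Leibler ambiguity set of radius `ρ` around `q`. -/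
def klBall (q : ι → ℝ) (ρ : ℝ) : Set (ι → ℝ) := {p ∈ stdSimplex ℝ ι | relEntropy p q ≤ ρ}

/-- The Lagrangian dual objective of maximising `p ⬝ᵥ c` over `klBall q ρ`, with multiplier `μ` for
the constraint `∑ k, p k = 1` and `ν` for `relEntropy p q ≤ ρ`. -/
noncomputable def klDualObjective (q : ι → ℝ) (ρ : ℝ) (c : ι → ℝ) (μ ν : ℝ) : ℝ :=
  μ + ρ * ν + ν * ∑ k, q k * Real.exp ((c k - μ) / ν - 1)

/-- The partition function of the exponential family through the weights `q`. -/
noncomputable def partitionFn (q x : ι → ℝ) : ℝ := ∑ k, q k * Real.exp (x k)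

/-- The exponential tilt of the weights `q` by `x`, normalised to total mass one. -/
noncomputable def expTilt (q x : ι → ℝ) (k : ι) : ℝ := q k * Real.exp (x k) / partitionFn q x

lemma relEntropy_self (q : ι → ℝ) : relEntropy q q = 0 :=
  sum_eq_zero fun k _ => by
    obtain h | h := eq_or_ne (q k) 0 <;> simp [h]

lemma continuous_relEntropy_left (q : ι → ℝ) : Continuous fun p => relEntropy p q := by
  refine continuous_finsetSum _ fun k _ => ?_
  have hterm : (fun p : ι → ℝ => p k * Real.log (p k / q k)) =
      fun p => q k * (p k / q k * Real.log (p k / q k)) := by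
    ext p
    obtain h | h := eq_or_ne (q k) 0
    · simp [h]
    · rw [← mul_assoc, mul_div_cancel₀ _ h]
  rw [hterm]
  exact continuous_const.mul (Real.continuous_mul_log.comp ((continuous_apply k).div_const _))

section WeakDuality

lemma mul_le_mul_log_div_add_mul_exp {a b y : ℝ} (ha : 0 ≤ a) (hb : 0 < b) :
    a * y ≤ a * Real.log (a / b) + b * Real.exp (y - 1) := by
  obtain rfl | ha := ha.eq_or_lt
  · simp only [zero_mul, zero_add]
    positivity
  · have hexp : b * Real.exp (y - 1) = a * Real.exp (y - 1 - Real.log (a / b)) := by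
      rw [Real.exp_sub _ (Real.log _), Real.exp_log (by positivity)]
      field_simp
    calc a * y = a * Real.log (a / b) + a * (y - 1 - Real.log (a / b) + 1) := by ring
      _ ≤ a * Real.log (a / b) + a * Real.exp (y - 1 - Real.log (a / b)) := by
        gcongr
        exact Real.add_one_le_exp _
      _ = a * Real.log (a / b) + b * Real.exp (y - 1) := by rw [hexp]

lemma dotProduct_le_relEntropy_add_sum_exp (hp : ∀ k, 0 ≤ p k) (hq : ∀ k, 0 < q k) :
    p ⬝ᵥ x ≤ relEntropy p q + ∑ k, q k * Real.exp (x k - 1) := by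
  rw [relEntropy, ← sum_add_distrib]
  exact sum_le_sum fun k _ => mul_le_mul_log_div_add_mul_exp (hp k) (hq k)

lemma neg_log_sum_le_relEntropy (hp : p ∈ stdSimplex ℝ ι) (hq : ∀ k, 0 < q k) :
    -Real.log (∑ k, q k) ≤ relEntropy p q := by
  have := nonempty_of_mem_stdSimplex hp
  have hQ : 0 < ∑ k, q k := sum_pos (fun k _ => hq k) univ_nonempty
  have h := dotProduct_le_relEntropy_add_sum_exp (x := fun _ => 1 - Real.log (∑ k, q k)) hp.1 hq
  have hdot : p ⬝ᵥ (fun _ => 1 - Real.log (∑ k, q k)) = 1 - Real.log (∑ k, q k) := by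
    rw [dotProduct, ← sum_mul, hp.2, one_mul]
  have hexp : ∑ k, q k * Real.exp (1 - Real.log (∑ k, q k) - 1) = 1 := by
    rw [← sum_mul, sub_sub_cancel_left, Real.exp_neg, Real.exp_log hQ, mul_inv_cancel₀ hQ.ne']
  linarith

lemma dotProduct_le_klDualObjective (hp : p ∈ klBall q ρ) (hq : ∀ k, 0 < q k) (hν : 0 < ν) :
    p ⬝ᵥ c ≤ klDualObjective q ρ c μ ν := by
  obtain ⟨⟨hp_nonneg, hp_sum⟩, hp_le⟩ := hp
  have hdot : p ⬝ᵥ c = μ + ν * (p ⬝ᵥ fun k => (c k - μ) / ν) := by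
    have hcoord : ∀ k, ν * (p k * ((c k - μ) / ν)) = p k * c k - p k * μ := fun k => by
      field_simp
    simp only [dotProduct, mul_sum, hcoord, sum_sub_distrib, ← sum_mul, hp_sum]
    ring
  calc p ⬝ᵥ c = μ + ν * (p ⬝ᵥ fun k => (c k - μ) / ν) := hdot
    _ ≤ μ + ν * (ρ + ∑ k, q k * Real.exp ((c k - μ) / ν - 1)) := by
      gcongr
      exact (dotProduct_le_relEntropy_add_sum_exp hp_nonneg hq).trans (by gcongr)
    _ = klDualObjective q ρ c μ ν := by
      rw [klDualObjective]
      ring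

end WeakDuality

section ExpTilt

variable [Nonempty ι]

lemma partitionFn_pos (hq : ∀ k, 0 < q k) (x : ι → ℝ) : 0 < partitionFn q x :=
  sum_pos (fun k _ => mul_pos (hq k) (Real.exp_pos _)) univ_nonempty

lemma expTilt_mem_stdSimplex (hq : ∀ k, 0 < q k) (x : ι → ℝ) :
    expTilt q x ∈ stdSimplex ℝ ι := by
  have hZ := partitionFn_pos hq x
  refine ⟨fun k => div_nonneg (mul_nonneg (hq k).le (Real.exp_pos _).le) hZ.le, ?_⟩
  simp only [expTilt]
  rw [← sum_div]
  exact div_self hZ.ne'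

lemma continuous_expTilt (hq : ∀ k, 0 < q k) : Continuous (expTilt q) := by
  have hZ : Continuous (partitionFn q) := by
    unfold partitionFn
    fun_prop
  exact continuous_pi fun k =>
    Continuous.div (by fun_prop) hZ fun x => (partitionFn_pos hq x).ne'

lemma expTilt_apply_eq_mul_exp_sub_log (hq : ∀ k, 0 < q k) (x : ι → ℝ) (k : ι) :
    expTilt q x k = q k * Real.exp (x k - Real.log (partitionFn q x)) := by
  rw [Real.exp_sub, Real.exp_log (partitionFn_pos hq x), expTilt, mul_div_assoc]

lemma relEntropy_expTilt (hq : ∀ k, 0 < q k) (x : ι → ℝ) :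
    relEntropy (expTilt q x) q = expTilt q x ⬝ᵥ x - Real.log (partitionFn q x) := by
  have hlog (k : ι) : Real.log (expTilt q x k / q k) = x k - Real.log (partitionFn q x) := by
    rw [expTilt_apply_eq_mul_exp_sub_log hq, mul_div_cancel_left₀ _ (hq k).ne', Real.log_exp]
  simp only [relEntropy, hlog, mul_sub, sum_sub_distrib, ← sum_mul,
    (expTilt_mem_stdSimplex hq x).2, one_mul, dotProduct]

lemma relEntropy_expTilt_zero (hq : ∀ k, 0 < q k) :
    relEntropy (expTilt q 0) q = -Real.log (∑ k, q k) := by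
  simp [relEntropy_expTilt hq, partitionFn]

end ExpTilt

section StrongDuality

variable [Nonempty ι]

lemma exists_klDualObjective_eq_expTilt (hq : ∀ k, 0 < q k) (ρ : ℝ) (c : ι → ℝ) (ht : 0 < t) :
    ∃ μ, klDualObjective q ρ c μ t⁻¹ =
      expTilt q (t • c) ⬝ᵥ c + (ρ - relEntropy (expTilt q (t • c)) q) / t := by
  set L := Real.log (partitionFn q (t • c))
  have hexponent (k : ι) : (c k - t⁻¹ * (L - 1)) / t⁻¹ - 1 = (t • c) k - L := by
    rw [Pi.smul_apply, smul_eq_mul]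
    field_simp
    ring
  have hsum : ∑ k, q k * Real.exp ((c k - t⁻¹ * (L - 1)) / t⁻¹ - 1) = 1 := by
    simp only [hexponent, L, ← expTilt_apply_eq_mul_exp_sub_log hq,
      (expTilt_mem_stdSimplex hq (t • c)).2]
  refine ⟨t⁻¹ * (L - 1), ?_⟩
  rw [klDualObjective, hsum, relEntropy_expTilt hq, dotProduct_smul, smul_eq_mul]
  field_simp
  ring

lemma exists_expTilt_dotProduct_le_add (hq : ∀ k, 0 < q k) (c : ι → ℝ) (hε : 0 < ε) :
    ∃ t : ℝ, 0 < t ∧ expTilt q (t • c) ⬝ᵥ c ≤ expTilt q 0 ⬝ᵥ c + ε := by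
  have hcont : Continuous fun t : ℝ => expTilt q (t • c) ⬝ᵥ c :=
    ((continuous_expTilt hq).comp (by fun_prop)).dotProduct continuous_const
  have hnhds : ∀ᶠ t : ℝ in 𝓝 0, expTilt q (t • c) ⬝ᵥ c < expTilt q 0 ⬝ᵥ c + ε :=
    hcont.continuousAt.eventually_lt_const (by simpa using hε)
  obtain ⟨t, hlt, ht⟩ :=
    ((hnhds.filter_mono nhdsWithin_le_nhds).and (self_mem_nhdsWithin (s := Set.Ioi 0))).exists
  exact ⟨t, ht, hlt.le⟩

lemma exists_expTilt_mem_klBall_gap_le (hq : ∀ k, 0 < q k) (c : ι → ℝ)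
    (hρ : -Real.log (∑ k, q k) < ρ) (hε : 0 < ε) :
    ∃ t : ℝ, 0 < t ∧ expTilt q (t • c) ∈ klBall q ρ ∧
      (ρ - relEntropy (expTilt q (t • c)) q) / t ≤ ε := by
  set T := (ρ - -Real.log (∑ k, q k)) / ε with hT_def
  have hT : 0 < T := div_pos (sub_pos.2 hρ) hε
  have hmem (t : ℝ) : expTilt q (t • c) ∈ stdSimplex ℝ ι := expTilt_mem_stdSimplex hq _
  obtain h | h := le_or_gt (relEntropy (expTilt q (T • c)) q) ρ
  · refine ⟨T, hT, ⟨hmem T, h⟩, ?_⟩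
    rw [div_le_iff₀ hT, hT_def, mul_div_cancel₀ _ hε.ne']
    exact sub_le_sub_left (neg_log_sum_le_relEntropy (hmem T) hq) ρ
  · have hcont : Continuous fun t : ℝ => relEntropy (expTilt q (t • c)) q :=
      (continuous_relEntropy_left q).comp ((continuous_expTilt hq).comp (by fun_prop))
    have hzero : relEntropy (expTilt q ((0 : ℝ) • c)) q < ρ := by
      rwa [zero_smul, relEntropy_expTilt_zero hq]
    obtain ⟨t, ht, (heq : relEntropy (expTilt q (t • c)) q = ρ)⟩ :=
      intermediate_value_Ioo hT.le hcont.continuousOn ⟨hzero, h⟩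
    exact ⟨t, ht.1, ⟨hmem t, heq.le⟩, by simpa [heq] using hε.le⟩

lemma exists_klDualObjective_le_dotProduct_add (hq : ∀ k, 0 < q k) (c : ι → ℝ)
    (hρ : -Real.log (∑ k, q k) ≤ ρ) (hε : 0 < ε) :
    ∃ p ∈ klBall q ρ, ∃ μ ν, 0 < ν ∧ klDualObjective q ρ c μ ν ≤ p ⬝ᵥ c + ε := by
  obtain rfl | hρ := hρ.eq_or_lt
  · obtain ⟨t, ht, hle⟩ := exists_expTilt_dotProduct_le_add hq c hε
    obtain ⟨μ, hμ⟩ := exists_klDualObjective_eq_expTilt hq (-Real.log (∑ k, q k)) c ht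
    refine ⟨expTilt q 0, ⟨expTilt_mem_stdSimplex hq 0, (relEntropy_expTilt_zero hq).le⟩,
      μ, t⁻¹, inv_pos.2 ht, ?_⟩
    have hgap : (-Real.log (∑ k, q k) - relEntropy (expTilt q (t • c)) q) / t ≤ 0 :=
      div_nonpos_of_nonpos_of_nonneg
        (sub_nonpos.2 (neg_log_sum_le_relEntropy (expTilt_mem_stdSimplex hq _) hq)) ht.le
    linarith
  · obtain ⟨t, ht, hmem, hgap⟩ := exists_expTilt_mem_klBall_gap_le hq c hρ hε
    obtain ⟨μ, hμ⟩ := exists_klDualObjective_eq_expTilt hq ρ c ht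
    exact ⟨_, hmem, μ, t⁻¹, inv_pos.2 ht, hμ.trans_le (by gcongr)⟩

end StrongDuality

theorem kl_duality_general (hq : ∀ k, 0 < q k) (hball : (klBall q ρ).Nonempty) (c : ι → ℝ) :
    sSup {s : ℝ | ∃ p ∈ klBall q ρ, s = p ⬝ᵥ c} =
      sInf {s : ℝ | ∃ μ ν : ℝ, 0 < ν ∧ s = klDualObjective q ρ c μ ν} := by
  obtain ⟨p₀, hp₀, hp₀_le⟩ := hball
  have := nonempty_of_mem_stdSimplex hp₀
  refine csSup_eq_csInf_of_forall_pos_le_add ?weak fun ε hε => ?strong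
  case weak =>
    rintro _ ⟨p, hp, rfl⟩ _ ⟨μ, ν, hν, rfl⟩
    exact dotProduct_le_klDualObjective hp hq hν
  case strong =>
    obtain ⟨p, hp, μ, ν, hν, hle⟩ := exists_klDualObjective_le_dotProduct_add hq c
      ((neg_log_sum_le_relEntropy hp₀ hq).trans hp₀_le) hε
    exact ⟨_, ⟨p, hp, rfl⟩, _, ⟨μ, ν, hν, rfl⟩, hle⟩

/-- Lagrangian duality for the worst-case expectation over the KL ambiguity set
of radius `ρ > 0`: the supremum of `∑ k, p k * c k` over probability vectors `p`
with `KL(p, p̄) ≤ ρ` equals the infimum over `μ ∈ ℝ`, `ν > 0` of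
`μ + ρν + ν ∑ k, p̄ k * exp ((c k - μ) / ν - 1)`.
(Note `Real.log 0 = 0`, which encodes the convention `0 * log 0 = 0`.) -/
theorem kl_duality
    (K : ℕ) (pbar : Fin K → ℝ) (hpbar : ∀ k, 0 < pbar k) (hpbarsum : ∑ k, pbar k = 1)
    (ρ : ℝ) (hρ : 0 < ρ) (c : Fin K → ℝ) :
    sSup {s : ℝ | ∃ p : Fin K → ℝ, (∀ k, 0 ≤ p k) ∧ ∑ k, p k = 1 ∧
        (∑ k, p k * Real.log (p k / pbar k) ≤ ρ) ∧ s = ∑ k, p k * c k} =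
      sInf {s : ℝ | ∃ μ ν : ℝ, 0 < ν ∧
        s = μ + ρ * ν + ν * ∑ k, pbar k * Real.exp ((c k - μ) / ν - 1)} := by
  have hmem : pbar ∈ klBall pbar ρ :=
    ⟨⟨fun k => (hpbar k).le, hpbarsum⟩, (relEntropy_self pbar).trans_le hρ.le⟩
  simpa only [klBall, stdSimplex, Set.mem_ofPred_eq, relEntropy, klDualObjective, dotProduct,
    and_assoc] using kl_duality_general hpbar ⟨pbar, hmem⟩ c
end
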